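/- arXiv:solv-int/9902003 — 2 statements merged into one kernel-verified Lean document; each statement's English description precedes it below -/
import Mathlib

section
/- Fix α, ε ∈ ℝ and j ∈ {1,2}. The Miura map M_j^{(+)}(α;ε) : ℳℛ𝒯 → ℛ𝒯 is a Poisson map (i) from ℳℛ𝒯 equipped with {·,·}_{12α} to ℛ𝒯 equipped with {·,·}_{1α} + ε{·,·}_{2α}, and (ii) from ℳℛ𝒯 equipped with {·,·}_{23α} to ℛ𝒯 equipped with {·,·}_{2α} + ε{·,·}_{3α}, on the open sets where 1 + εαq_k ≠ 0 for all k (i.e. DM_j^{(+)}(α;ε)(x)·J(x)·DM_j^{(+)}(α;ε)(x)ᵀ = J'(M_j^{(+)}(α;ε)(x)) for the respective structure matrices). Moreover, the pull-back of the flow RTL_+(α) under M_j^{(+)}(α;ε) coincides with MRTL_+^{(+)}(α;ε), and, on the open set where additionally all denominators of RTL_−(α) and MRTL_−^{(+)}(α;ε) are nonzero, the pull-back of RTL_−(α) under M_j^{(+)}(α;ε) coincides with MRTL_−^{(+)}(α;ε). -/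
open scoped BigOperators

/-- Index set for the periodic phase space `ℝ^{2N}`: `Sum.inl k` indexes the first
family of coordinates and `Sum.inr k` the second family, `k ∈ ℤ/Nℤ`. -/
abbrev Idx (N : ℕ) : Type := (ZMod N) ⊕ (ZMod N)

/-- The phase space `ℝ^{2N}`. -/
abbrev Phase (N : ℕ) : Type := Idx N → ℝ

/-- First family of coordinates. -/
def c1 {N : ℕ} (x : Phase N) (k : ZMod N) : ℝ := x (Sum.inl k)

/-- Second family of coordinates. -/
def c2 {N : ℕ} (x : Phase N) (k : ZMod N) : ℝ := x (Sum.inr k)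

/-- A structure matrix on `Phase N`. -/
abbrev SM (N : ℕ) : Type := Phase N → Idx N → Idx N → ℝ

/-- Partial derivative of `F` at `x` in the `i`-th coordinate direction. -/
noncomputable def pderiv {N : ℕ} [NeZero N] (i : Idx N) (F : Phase N → ℝ)
    (x : Phase N) : ℝ :=
  fderiv ℝ F x (Pi.single i 1)

/-- The bracket of two functions associated with a structure matrix `J`:
`{F,G}(x) = ∑_{i,j} ∂_i F(x) · J_{ij}(x) · ∂_j G(x)`. -/
noncomputable def bracket {N : ℕ} [NeZero N] (J : SM N) (F G : Phase N → ℝ)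
    (x : Phase N) : ℝ :=
  ∑ i : Idx N, ∑ j : Idx N, pderiv i F x * J x i j * pderiv j G x

/-- The Jacobi identity for `J` holds at every point satisfying `P`. -/
def JacobiOn {N : ℕ} [NeZero N] (J : SM N) (P : Phase N → Prop) : Prop :=
  ∀ F G H : Phase N → ℝ, ContDiff ℝ (⊤ : ℕ∞) F → ContDiff ℝ (⊤ : ℕ∞) G →
    ContDiff ℝ (⊤ : ℕ∞) H → ∀ x : Phase N, P x →
      bracket J (bracket J F G) H x + bracket J (bracket J G H) F x +
        bracket J (bracket J H F) G x = 0

/-- `J` defines a Poisson bracket: the Jacobi identity holds everywhere. -/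
def IsPoisson {N : ℕ} [NeZero N] (J : SM N) : Prop :=
  JacobiOn J fun _ => True

/-- `f(x) = J(x)∇H(x)`: the vector field `f` is Hamiltonian at `x` with respect
to the structure matrix `J`, with Hamilton function `H`. -/
def HamAt {N : ℕ} [NeZero N] (J : SM N) (f : Phase N → Phase N)
    (H : Phase N → ℝ) (x : Phase N) : Prop :=
  ∀ i : Idx N, f x i = ∑ j : Idx N, J x i j * pderiv j H x

/-- `Dφ(x)·J(x)·Dφ(x)ᵀ = J'(φ(x))`: `φ` is a Poisson map at `x` from the
structure matrix `J` to the structure matrix `J'`. -/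
def PoissonMapAt {N : ℕ} [NeZero N] (φ : Phase N → Phase N) (J J' : SM N)
    (x : Phase N) : Prop :=
  ∀ i j : Idx N,
    (∑ k : Idx N, ∑ l : Idx N,
      pderiv k (fun y => φ y i) x * J x k l * pderiv l (fun y => φ y j) x)
      = J' (φ x) i j

/-- `Dφ(x)·f(x) = g(φ(x))`: the vector field `f` is the pull-back of the vector
field `g` under `φ`, at the point `x`. -/
def PullbackAt {N : ℕ} [NeZero N] (φ : Phase N → Phase N)
    (f g : Phase N → Phase N) (x : Phase N) : Prop :=
  ∀ i : Idx N, (∑ k : Idx N, pderiv k (fun y => φ y i) x * f x k) = g (φ x) i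

/-- Quadratic Toda structure matrix `J₂`: `{b_k,a_k} = -b_k a_k`,
`{a_k,b_{k+1}} = -a_k b_{k+1}`, `{b_k,b_{k+1}} = -a_k`, `{a_k,a_{k+1}} = -a_k a_{k+1}`. -/
noncomputable def JT2 {N : ℕ} (x : Phase N) : Idx N → Idx N → ℝ := fun i₁ i₂ =>
  match i₁, i₂ with
  | Sum.inl j, Sum.inr k =>
      if j = k then -(c1 x k * c2 x k)
      else if j = k + 1 then c2 x k * c1 x (k + 1) else 0
  | Sum.inr k, Sum.inl j =>
      if j = k then c1 x k * c2 x k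
      else if j = k + 1 then -(c2 x k * c1 x (k + 1)) else 0
  | Sum.inl j, Sum.inl l =>
      if l = j + 1 then -c2 x j else if j = l + 1 then c2 x l else 0
  | Sum.inr j, Sum.inr l =>
      if l = j + 1 then -(c2 x j * c2 x (j + 1))
      else if j = l + 1 then c2 x l * c2 x (l + 1) else 0

/-- Relativistic Toda structure matrix `J_{1α}`: `{b_k,a_k} = -a_k`,
`{a_k,b_{k+1}} = -a_k`, `{b_k,b_{k+1}} = αa_k`. -/
noncomputable def JR1 (α : ℝ) {N : ℕ} (x : Phase N) : Idx N → Idx N → ℝ := fun i₁ i₂ =>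
  match i₁, i₂ with
  | Sum.inl j, Sum.inr k =>
      if j = k then -c2 x k else if j = k + 1 then c2 x k else 0
  | Sum.inr k, Sum.inl j =>
      if j = k then c2 x k else if j = k + 1 then -c2 x k else 0
  | Sum.inl j, Sum.inl l =>
      if l = j + 1 then α * c2 x j else if j = l + 1 then -(α * c2 x l) else 0
  | _, _ => 0

/-- Relativistic Toda structure matrix `J_{3α}`. -/
noncomputable def JR3 (α : ℝ) {N : ℕ} (x : Phase N) : Idx N → Idx N → ℝ := fun i₁ i₂ =>
  match i₁, i₂ with
  | Sum.inl j, Sum.inr k =>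
      if j = k then -(c2 x k * ((c1 x k) ^ 2 + c2 x k)) - α * c1 x k * (c2 x k) ^ 2
      else if j = k + 1 then
        c2 x k * ((c1 x (k + 1)) ^ 2 + c2 x k) + α * (c2 x k) ^ 2 * c1 x (k + 1)
      else if k = j + 1 then
        -(c2 x j * c2 x k) - α * c1 x j * c2 x j * c2 x k
      else if j = k + 2 then
        c2 x k * c2 x (k + 1) + α * c2 x k * c2 x (k + 1) * c1 x (k + 2)
      else 0
  | Sum.inr k, Sum.inl j =>
      if j = k then c2 x k * ((c1 x k) ^ 2 + c2 x k) + α * c1 x k * (c2 x k) ^ 2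
      else if j = k + 1 then
        -(c2 x k * ((c1 x (k + 1)) ^ 2 + c2 x k)) - α * (c2 x k) ^ 2 * c1 x (k + 1)
      else if k = j + 1 then
        c2 x j * c2 x k + α * c1 x j * c2 x j * c2 x k
      else if j = k + 2 then
        -(c2 x k * c2 x (k + 1)) - α * c2 x k * c2 x (k + 1) * c1 x (k + 2)
      else 0
  | Sum.inl j, Sum.inl l =>
      if l = j + 1 then
        -(c2 x j * (c1 x j + c1 x (j + 1))) - α * c1 x j * c2 x j * c1 x (j + 1)
      else if j = l + 1 then
        c2 x l * (c1 x l + c1 x (l + 1)) + α * c1 x l * c2 x l * c1 x (l + 1)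
      else 0
  | Sum.inr j, Sum.inr l =>
      if l = j + 1 then
        -(2 * c2 x j * c1 x (j + 1) * c2 x (j + 1))
          - α * c2 x j * c2 x (j + 1) * (c2 x j + c2 x (j + 1))
      else if l = j + 2 then -(α * c2 x j * c2 x (j + 1) * c2 x (j + 2))
      else if j = l + 1 then
        2 * c2 x l * c1 x (l + 1) * c2 x (l + 1)
          + α * c2 x l * c2 x (l + 1) * (c2 x l + c2 x (l + 1))
      else if j = l + 2 then α * c2 x l * c2 x (l + 1) * c2 x (l + 2)
      else 0

/-- The relativistic Toda vector field `RTL₊(α)`. -/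
noncomputable def rtlP (α : ℝ) {N : ℕ} (x : Phase N) : Phase N := fun i =>
  match i with
  | Sum.inl k => (1 + α * c1 x k) * (c2 x k - c2 x (k - 1))
  | Sum.inr k =>
      c2 x k * (c1 x (k + 1) - c1 x k + α * c2 x (k + 1) - α * c2 x (k - 1))

/-- The relativistic Toda vector field `RTL₋(α)`. -/
noncomputable def rtlM (α : ℝ) {N : ℕ} (x : Phase N) : Phase N := fun i =>
  match i with
  | Sum.inl k =>
      c2 x k / (1 + α * c1 x (k + 1)) - c2 x (k - 1) / (1 + α * c1 x (k - 1))
  | Sum.inr k =>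
      c2 x k * (c1 x (k + 1) / (1 + α * c1 x (k + 1)) - c1 x k / (1 + α * c1 x k))

/-- Structure matrix `J_{12α}` on `ℳℛ𝒯`:
`{p_k,q_k} = -q_k(1+εp_k)`, `{q_k,p_{k+1}} = -q_k(1+εp_{k+1})`,
`{p_k,p_{k+1}} = α·q_k(1+εp_k)(1+εp_{k+1})/(1+εαq_k)`. -/
noncomputable def JMR12 (α ε : ℝ) {N : ℕ} (x : Phase N) : Idx N → Idx N → ℝ := fun i₁ i₂ =>
  match i₁, i₂ with
  | Sum.inl j, Sum.inr k =>
      if j = k then -(c2 x k * (1 + ε * c1 x k))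
      else if j = k + 1 then c2 x k * (1 + ε * c1 x (k + 1)) else 0
  | Sum.inr k, Sum.inl j =>
      if j = k then c2 x k * (1 + ε * c1 x k)
      else if j = k + 1 then -(c2 x k * (1 + ε * c1 x (k + 1))) else 0
  | Sum.inl j, Sum.inl l =>
      if l = j + 1 then
        α * c2 x j * (1 + ε * c1 x j) * (1 + ε * c1 x (j + 1)) / (1 + ε * α * c2 x j)
      else if j = l + 1 then
        -(α * c2 x l * (1 + ε * c1 x l) * (1 + ε * c1 x (l + 1)) / (1 + ε * α * c2 x l))
      else 0
  | _, _ => 0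

/-- Structure matrix `J_{23α}` on `ℳℛ𝒯`. -/
noncomputable def JMR23 (α ε : ℝ) {N : ℕ} (x : Phase N) : Idx N → Idx N → ℝ := fun i₁ i₂ =>
  match i₁, i₂ with
  | Sum.inl j, Sum.inr k =>
      if j = k then
        -(c2 x k * (c1 x k + ε * c2 x k + ε * α * c1 x k * c2 x k) * (1 + ε * c1 x k))
      else if j = k + 1 then
        c2 x k * (c1 x (k + 1) + ε * c2 x k + ε * α * c1 x (k + 1) * c2 x k)
          * (1 + ε * c1 x (k + 1))
      else 0
  | Sum.inr k, Sum.inl j =>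
      if j = k then
        c2 x k * (c1 x k + ε * c2 x k + ε * α * c1 x k * c2 x k) * (1 + ε * c1 x k)
      else if j = k + 1 then
        -(c2 x k * (c1 x (k + 1) + ε * c2 x k + ε * α * c1 x (k + 1) * c2 x k)
          * (1 + ε * c1 x (k + 1)))
      else 0
  | Sum.inl j, Sum.inl l =>
      if l = j + 1 then
        -(c2 x j * (1 + ε * c1 x j) * (1 + ε * c1 x (j + 1)) / (1 + ε * α * c2 x j))
      else if j = l + 1 then
        c2 x l * (1 + ε * c1 x l) * (1 + ε * c1 x (l + 1)) / (1 + ε * α * c2 x l)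
      else 0
  | Sum.inr j, Sum.inr l =>
      if l = j + 1 then
        -(c2 x j * c2 x (j + 1) * (1 + ε * c1 x (j + 1)) * (1 + ε * α * c2 x j)
          * (1 + ε * α * c2 x (j + 1)))
      else if j = l + 1 then
        c2 x l * c2 x (l + 1) * (1 + ε * c1 x (l + 1)) * (1 + ε * α * c2 x l)
          * (1 + ε * α * c2 x (l + 1))
      else 0

/-- The vector field `MRTL₊⁽⁺⁾(α;ε)`. -/
noncomputable def mrtlPp (α ε : ℝ) {N : ℕ} (x : Phase N) : Phase N := fun i =>
  match i with
  | Sum.inl k => (1 + α * c1 x k) * (1 + ε * c1 x k) * (c2 x k - c2 x (k - 1))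
  | Sum.inr k =>
      c2 x k * (1 + ε * α * c2 x k) *
        (c1 x (k + 1) + α * c2 x (k + 1) + ε * α * c1 x (k + 1) * c2 x (k + 1)
          - c1 x k - α * c2 x (k - 1) - ε * α * c1 x k * c2 x (k - 1))

/-- The vector field `MRTL₋⁽⁺⁾(α;ε)`. -/
noncomputable def mrtlPm (α ε : ℝ) {N : ℕ} (x : Phase N) : Phase N := fun i =>
  match i with
  | Sum.inl k =>
      (1 + ε * c1 x k) *
        (c2 x k / ((1 + α * c1 x (k + 1)) * (1 + ε * α * c2 x k))
          - c2 x (k - 1) / ((1 + α * c1 x (k - 1)) * (1 + ε * α * c2 x (k - 1))))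
  | Sum.inr k =>
      c2 x k * (c1 x (k + 1) / (1 + α * c1 x (k + 1)) - c1 x k / (1 + α * c1 x k))

/-- Miura map `M₁⁽⁺⁾(α;ε) : ℳℛ𝒯 → ℛ𝒯`: `b_k = p_k + εq_{k-1} + εαp_k q_{k-1}`,
`a_k = q_k(1+εp_k)(1+εαq_{k-1})`. -/
noncomputable def miuraMR1 (α ε : ℝ) {N : ℕ} (x : Phase N) : Phase N := fun i =>
  match i with
  | Sum.inl k => c1 x k + ε * c2 x (k - 1) + ε * α * c1 x k * c2 x (k - 1)
  | Sum.inr k => c2 x k * (1 + ε * c1 x k) * (1 + ε * α * c2 x (k - 1))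

/-- Miura map `M₂⁽⁺⁾(α;ε) : ℳℛ𝒯 → ℛ𝒯`: `b_k = p_k + εq_k + εαp_k q_k`,
`a_k = q_k(1+εp_{k+1})(1+εαq_{k+1})`. -/
noncomputable def miuraMR2 (α ε : ℝ) {N : ℕ} (x : Phase N) : Phase N := fun i =>
  match i with
  | Sum.inl k => c1 x k + ε * c2 x k + ε * α * c1 x k * c2 x k
  | Sum.inr k => c2 x k * (1 + ε * c1 x (k + 1)) * (1 + ε * α * c2 x (k + 1))


theorem sum_pderiv {N : ℕ} [NeZero N] {F : Phase N → ℝ} {x : Phase N} {F' : Phase N →L[ℝ] ℝ}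
    (h : HasFDerivAt F F' x) (v : Phase N) :
    (∑ m : Idx N, pderiv m F x * v m) = F' v := by
  have h2 := LinearMap.pi_apply_eq_sum_univ F'.toLinearMap v
  simp only [ContinuousLinearMap.coe_coe] at h2
  rw [h2]
  refine Finset.sum_congr rfl fun m _ => ?_
  unfold pderiv
  rw [h.fderiv, smul_eq_mul, mul_comm]
  congr 2
  funext j
  simp [Pi.single_apply, eq_comm]

theorem sum_pderiv' {N : ℕ} [NeZero N] {F : Phase N → ℝ} {x : Phase N} {F' : Phase N →L[ℝ] ℝ}
    (h : HasFDerivAt F F' x) (v : Phase N) :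
    (∑ m : Idx N, v m * pderiv m F x) = F' v := by
  rw [← sum_pderiv h v]
  exact Finset.sum_congr rfl fun m _ => mul_comm _ _

theorem hd_b {N : ℕ} [NeZero N] (α ε : ℝ) (x : Phase N) (k s : ZMod N) :
    ∃ F' : Phase N →L[ℝ] ℝ,
      HasFDerivAt (fun y : Phase N => c1 y k + ε * c2 y s + ε * α * c1 y k * c2 y s) F' x ∧
      ∀ v : Phase N, F' v = (1 + ε * α * c2 x s) * v (Sum.inl k)
        + (ε + ε * α * c1 x k) * v (Sum.inr s) := by
  have hp : HasFDerivAt (fun y : Phase N => c1 y k) _ x := hasFDerivAt_apply (𝕜 := ℝ) (Sum.inl k) x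
  have hq : HasFDerivAt (fun y : Phase N => c2 y s) _ x := hasFDerivAt_apply (𝕜 := ℝ) (Sum.inr s) x
  refine ⟨_, (hp.add (hq.const_mul ε)).add ((hp.const_mul (ε * α)).mul hq), fun v => ?_⟩
  simp
  ring

theorem hd_a {N : ℕ} [NeZero N] (α ε : ℝ) (x : Phase N) (k s t : ZMod N) :
    ∃ F' : Phase N →L[ℝ] ℝ,
      HasFDerivAt (fun y : Phase N => c2 y k * (1 + ε * c1 y s) * (1 + ε * α * c2 y t)) F' x ∧
      ∀ v : Phase N, F' v = (1 + ε * c1 x s) * (1 + ε * α * c2 x t) * v (Sum.inr k)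
        + c2 x k * ε * (1 + ε * α * c2 x t) * v (Sum.inl s)
        + c2 x k * (1 + ε * c1 x s) * (ε * α) * v (Sum.inr t) := by
  have hk : HasFDerivAt (fun y : Phase N => c2 y k) _ x := hasFDerivAt_apply (𝕜 := ℝ) (Sum.inr k) x
  have hp : HasFDerivAt (fun y : Phase N => c1 y s) _ x := hasFDerivAt_apply (𝕜 := ℝ) (Sum.inl s) x
  have hq : HasFDerivAt (fun y : Phase N => c2 y t) _ x := hasFDerivAt_apply (𝕜 := ℝ) (Sum.inr t) x
  refine ⟨_, (hk.mul ((hp.const_mul ε).const_add 1)).mul ((hq.const_mul (ε * α)).const_add 1),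
    fun v => ?_⟩
  simp
  ring

/-- The differential of `miuraMR1` in coordinates. -/
def DM1 {N : ℕ} (α ε : ℝ) (x : Phase N) (i : Idx N) (v : Phase N) : ℝ :=
  match i with
  | Sum.inl k => (1 + ε * α * c2 x (k - 1)) * v (Sum.inl k)
        + (ε + ε * α * c1 x k) * v (Sum.inr (k - 1))
  | Sum.inr k => (1 + ε * c1 x k) * (1 + ε * α * c2 x (k - 1)) * v (Sum.inr k)
        + c2 x k * ε * (1 + ε * α * c2 x (k - 1)) * v (Sum.inl k)
        + c2 x k * (1 + ε * c1 x k) * (ε * α) * v (Sum.inr (k - 1))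

/-- The differential of `miuraMR2` in coordinates. -/
def DM2 {N : ℕ} (α ε : ℝ) (x : Phase N) (i : Idx N) (v : Phase N) : ℝ :=
  match i with
  | Sum.inl k => (1 + ε * α * c2 x k) * v (Sum.inl k)
        + (ε + ε * α * c1 x k) * v (Sum.inr k)
  | Sum.inr k => (1 + ε * c1 x (k + 1)) * (1 + ε * α * c2 x (k + 1)) * v (Sum.inr k)
        + c2 x k * ε * (1 + ε * α * c2 x (k + 1)) * v (Sum.inl (k + 1))
        + c2 x k * (1 + ε * c1 x (k + 1)) * (ε * α) * v (Sum.inr (k + 1))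

theorem hd1 {N : ℕ} [NeZero N] (α ε : ℝ) (x : Phase N) (i : Idx N) :
    ∃ F' : Phase N →L[ℝ] ℝ, HasFDerivAt (fun y : Phase N => miuraMR1 α ε y i) F' x ∧
      ∀ v : Phase N, F' v = DM1 α ε x i v := by
  rcases i with k | k
  · exact hd_b α ε x k (k - 1)
  · exact hd_a α ε x k k (k - 1)

theorem hd2 {N : ℕ} [NeZero N] (α ε : ℝ) (x : Phase N) (i : Idx N) :
    ∃ F' : Phase N →L[ℝ] ℝ, HasFDerivAt (fun y : Phase N => miuraMR2 α ε y i) F' x ∧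
      ∀ v : Phase N, F' v = DM2 α ε x i v := by
  rcases i with k | k
  · exact hd_b α ε x k k
  · exact hd_a α ε x k (k + 1) (k + 1)

theorem pull_of {N : ℕ} [NeZero N] {φ f g : Phase N → Phase N} {x : Phase N}
    {D : Idx N → Phase N → ℝ}
    (hD : ∀ i, ∃ F' : Phase N →L[ℝ] ℝ, HasFDerivAt (fun y : Phase N => φ y i) F' x ∧
      ∀ v : Phase N, F' v = D i v)
    (h : ∀ i, D i (f x) = g (φ x) i) : PullbackAt φ f g x := by
  intro i
  obtain ⟨F', h1, h2⟩ := hD i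
  rw [sum_pderiv h1, h2, h]

theorem poisson_of {N : ℕ} [NeZero N] {φ : Phase N → Phase N} {J J' : SM N} {x : Phase N}
    {D : Idx N → Phase N → ℝ}
    (hD : ∀ i, ∃ F' : Phase N →L[ℝ] ℝ, HasFDerivAt (fun y : Phase N => φ y i) F' x ∧
      ∀ v : Phase N, F' v = D i v)
    (h : ∀ i j, D i (fun k => D j (fun l => J x k l)) = J' (φ x) i j) :
    PoissonMapAt φ J J' x := by
  intro i j
  obtain ⟨F', h1, h2⟩ := hD i
  obtain ⟨G', h3, h4⟩ := hD j
  rw [← h, ← h2, ← sum_pderiv h1]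
  refine Finset.sum_congr rfl fun k _ => ?_
  rw [← h4, ← sum_pderiv' h3, Finset.mul_sum]
  exact Finset.sum_congr rfl fun l _ => by ring

/-- `k` and `l` are at distance at least three; all consequences used below. -/
theorem far_facts {N : ℕ} {k l : ZMod N} (h0 : l ≠ k) (h1 : l ≠ k + 1) (h2 : l ≠ k + 2)
    (h3 : k ≠ l + 1) (h4 : k ≠ l + 2) :
    (k - 1 ≠ l - 1) ∧
    (l - 1 ≠ k - 1) ∧
    (k - 1 ≠ l) ∧
    (l ≠ k - 1) ∧
    (k - 1 ≠ l + 1) ∧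
    (l + 1 ≠ k - 1) ∧
    (k ≠ l - 1) ∧
    (l - 1 ≠ k) ∧
    (k ≠ l) ∧
    (l ≠ k) ∧
    (k ≠ l + 1) ∧
    (l + 1 ≠ k) ∧
    (k ≠ l + 2) ∧
    (l + 2 ≠ k) ∧
    (k ≠ l + 1 + 1) ∧
    (l + 1 + 1 ≠ k) ∧
    (k + 1 ≠ l - 1) ∧
    (l - 1 ≠ k + 1) ∧
    (k + 1 ≠ l) ∧
    (l ≠ k + 1) ∧
    (k + 1 ≠ l + 1) ∧
    (l + 1 ≠ k + 1) ∧
    (k + 1 ≠ l + 2) ∧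
    (l + 2 ≠ k + 1) ∧
    (k + 1 ≠ l + 1 + 1) ∧
    (l + 1 + 1 ≠ k + 1) ∧
    (k + 2 ≠ l) ∧
    (l ≠ k + 2) ∧
    (k + 2 ≠ l + 1) ∧
    (l + 1 ≠ k + 2) ∧
    (k + 2 ≠ l + 2) ∧
    (l + 2 ≠ k + 2) ∧
    (k + 2 ≠ l + 1 + 1) ∧
    (l + 1 + 1 ≠ k + 2) ∧
    (k + 1 + 1 ≠ l) ∧
    (l ≠ k + 1 + 1) ∧
    (k + 1 + 1 ≠ l + 1) ∧
    (l + 1 ≠ k + 1 + 1) ∧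
    (k + 1 + 1 ≠ l + 2) ∧
    (l + 2 ≠ k + 1 + 1) ∧
    (k + 1 + 1 ≠ l + 1 + 1) ∧
    (l + 1 + 1 ≠ k + 1 + 1) := by
  refine ⟨?_, ?_, ?_, ?_, ?_, ?_, ?_, ?_, ?_, ?_, ?_, ?_, ?_, ?_, ?_, ?_, ?_, ?_, ?_, ?_, ?_, ?_, ?_, ?_, ?_, ?_, ?_, ?_, ?_, ?_, ?_, ?_, ?_, ?_, ?_, ?_, ?_, ?_, ?_, ?_, ?_, ?_⟩ <;> intro e <;>
  first
  | exact h0 (by linear_combination e)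
  | exact h0 (by linear_combination -e)
  | exact h1 (by linear_combination e)
  | exact h1 (by linear_combination -e)
  | exact h2 (by linear_combination e)
  | exact h2 (by linear_combination -e)
  | exact h3 (by linear_combination e)
  | exact h3 (by linear_combination -e)
  | exact h4 (by linear_combination e)
  | exact h4 (by linear_combination -e)


theorem lit_ne {N : ℕ} (hN : 5 ≤ N) (m : ZMod N) (a b : ℕ) (h : a < b) (h' : b < a + 5) :
    m + (a : ZMod N) ≠ m + (b : ZMod N) := by
  intro e
  have e2 := add_left_cancel e
  rw [ZMod.natCast_eq_natCast_iff'] at e2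
  have e3 : (b - a) % N = 0 := Nat.sub_mod_eq_zero_of_mod_eq e2.symm
  rw [Nat.mod_eq_of_lt (by omega)] at e3
  omega

/-- Decision facts for literal shifts. -/
theorem lit_facts {N : ℕ} (hN : 5 ≤ N) (m : ZMod N) :
    (m + 1 ≠ m + 2) ∧
    (m + 1 ≠ m + 3) ∧
    (m + 1 ≠ m + 4) ∧
    (m + 1 ≠ m + 5) ∧
    (m + 2 ≠ m + 1) ∧
    (m + 2 ≠ m + 3) ∧
    (m + 2 ≠ m + 4) ∧
    (m + 2 ≠ m + 5) ∧
    (m + 2 ≠ m + 6) ∧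
    (m + 3 ≠ m + 1) ∧
    (m + 3 ≠ m + 2) ∧
    (m + 3 ≠ m + 4) ∧
    (m + 3 ≠ m + 5) ∧
    (m + 3 ≠ m + 6) ∧
    (m + 3 ≠ m + 7) ∧
    (m + 4 ≠ m + 1) ∧
    (m + 4 ≠ m + 2) ∧
    (m + 4 ≠ m + 3) ∧
    (m + 4 ≠ m + 5) ∧
    (m + 4 ≠ m + 6) ∧
    (m + 4 ≠ m + 7) ∧
    (m + 4 ≠ m + 8) ∧
    (m + 5 ≠ m + 1) ∧
    (m + 5 ≠ m + 2) ∧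
    (m + 5 ≠ m + 3) ∧
    (m + 5 ≠ m + 4) ∧
    (m + 5 ≠ m + 6) ∧
    (m + 5 ≠ m + 7) ∧
    (m + 5 ≠ m + 8) ∧
    (m + 6 ≠ m + 2) ∧
    (m + 6 ≠ m + 3) ∧
    (m + 6 ≠ m + 4) ∧
    (m + 6 ≠ m + 5) ∧
    (m + 6 ≠ m + 7) ∧
    (m + 6 ≠ m + 8) ∧
    (m + 7 ≠ m + 3) ∧
    (m + 7 ≠ m + 4) ∧
    (m + 7 ≠ m + 5) ∧
    (m + 7 ≠ m + 6) ∧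
    (m + 7 ≠ m + 8) ∧
    (m + 8 ≠ m + 4) ∧
    (m + 8 ≠ m + 5) ∧
    (m + 8 ≠ m + 6) ∧
    (m + 8 ≠ m + 7) := by
  refine ⟨by exact_mod_cast lit_ne hN m 1 2 (by norm_num) (by norm_num),
    by exact_mod_cast lit_ne hN m 1 3 (by norm_num) (by norm_num),
    by exact_mod_cast lit_ne hN m 1 4 (by norm_num) (by norm_num),
    by exact_mod_cast lit_ne hN m 1 5 (by norm_num) (by norm_num),
    by exact_mod_cast (lit_ne hN m 1 2 (by norm_num) (by norm_num)).symm,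
    by exact_mod_cast lit_ne hN m 2 3 (by norm_num) (by norm_num),
    by exact_mod_cast lit_ne hN m 2 4 (by norm_num) (by norm_num),
    by exact_mod_cast lit_ne hN m 2 5 (by norm_num) (by norm_num),
    by exact_mod_cast lit_ne hN m 2 6 (by norm_num) (by norm_num),
    by exact_mod_cast (lit_ne hN m 1 3 (by norm_num) (by norm_num)).symm,
    by exact_mod_cast (lit_ne hN m 2 3 (by norm_num) (by norm_num)).symm,
    by exact_mod_cast lit_ne hN m 3 4 (by norm_num) (by norm_num),
    by exact_mod_cast lit_ne hN m 3 5 (by norm_num) (by norm_num),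
    by exact_mod_cast lit_ne hN m 3 6 (by norm_num) (by norm_num),
    by exact_mod_cast lit_ne hN m 3 7 (by norm_num) (by norm_num),
    by exact_mod_cast (lit_ne hN m 1 4 (by norm_num) (by norm_num)).symm,
    by exact_mod_cast (lit_ne hN m 2 4 (by norm_num) (by norm_num)).symm,
    by exact_mod_cast (lit_ne hN m 3 4 (by norm_num) (by norm_num)).symm,
    by exact_mod_cast lit_ne hN m 4 5 (by norm_num) (by norm_num),
    by exact_mod_cast lit_ne hN m 4 6 (by norm_num) (by norm_num),
    by exact_mod_cast lit_ne hN m 4 7 (by norm_num) (by norm_num),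
    by exact_mod_cast lit_ne hN m 4 8 (by norm_num) (by norm_num),
    by exact_mod_cast (lit_ne hN m 1 5 (by norm_num) (by norm_num)).symm,
    by exact_mod_cast (lit_ne hN m 2 5 (by norm_num) (by norm_num)).symm,
    by exact_mod_cast (lit_ne hN m 3 5 (by norm_num) (by norm_num)).symm,
    by exact_mod_cast (lit_ne hN m 4 5 (by norm_num) (by norm_num)).symm,
    by exact_mod_cast lit_ne hN m 5 6 (by norm_num) (by norm_num),
    by exact_mod_cast lit_ne hN m 5 7 (by norm_num) (by norm_num),
    by exact_mod_cast lit_ne hN m 5 8 (by norm_num) (by norm_num),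
    by exact_mod_cast (lit_ne hN m 2 6 (by norm_num) (by norm_num)).symm,
    by exact_mod_cast (lit_ne hN m 3 6 (by norm_num) (by norm_num)).symm,
    by exact_mod_cast (lit_ne hN m 4 6 (by norm_num) (by norm_num)).symm,
    by exact_mod_cast (lit_ne hN m 5 6 (by norm_num) (by norm_num)).symm,
    by exact_mod_cast lit_ne hN m 6 7 (by norm_num) (by norm_num),
    by exact_mod_cast lit_ne hN m 6 8 (by norm_num) (by norm_num),
    by exact_mod_cast (lit_ne hN m 3 7 (by norm_num) (by norm_num)).symm,
    by exact_mod_cast (lit_ne hN m 4 7 (by norm_num) (by norm_num)).symm,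
    by exact_mod_cast (lit_ne hN m 5 7 (by norm_num) (by norm_num)).symm,
    by exact_mod_cast (lit_ne hN m 6 7 (by norm_num) (by norm_num)).symm,
    by exact_mod_cast lit_ne hN m 7 8 (by norm_num) (by norm_num),
    by exact_mod_cast (lit_ne hN m 4 8 (by norm_num) (by norm_num)).symm,
    by exact_mod_cast (lit_ne hN m 5 8 (by norm_num) (by norm_num)).symm,
    by exact_mod_cast (lit_ne hN m 6 8 (by norm_num) (by norm_num)).symm,
    by exact_mod_cast (lit_ne hN m 7 8 (by norm_num) (by norm_num)).symm⟩

/-- Normalisation of shifts. -/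
theorem shift_facts {N : ℕ} (m : ZMod N) :
    (m + 2 - 1 = m + 1) ∧
    (m + 3 - 1 = m + 2) ∧
    (m + 4 - 1 = m + 3) ∧
    (m + 5 - 1 = m + 4) ∧
    (m + 6 - 1 = m + 5) ∧
    (m + 7 - 1 = m + 6) ∧
    (m + 1 + 1 = m + 2) ∧
    (m + 1 + 2 = m + 3) ∧
    (m + 2 + 1 = m + 3) ∧
    (m + 2 + 2 = m + 4) ∧
    (m + 3 + 1 = m + 4) ∧
    (m + 3 + 2 = m + 5) ∧
    (m + 4 + 1 = m + 5) ∧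
    (m + 4 + 2 = m + 6) ∧
    (m + 5 + 1 = m + 6) ∧
    (m + 5 + 2 = m + 7) ∧
    (m + 6 + 1 = m + 7) ∧
    (m + 6 + 2 = m + 8) ∧
    (m + 7 + 1 = m + 8) ∧
    (m + 7 + 2 = m + 9) := by
  refine ⟨?_, ?_, ?_, ?_, ?_, ?_, ?_, ?_, ?_, ?_, ?_, ?_, ?_, ?_, ?_, ?_, ?_, ?_, ?_, ?_⟩ <;> ring

theorem idx_cases {N : ℕ} (P : ZMod N → ZMod N → Prop)
    (h0 : ∀ m, P (m + 4) (m + 4)) (h1 : ∀ m, P (m + 4) (m + 5)) (h2 : ∀ m, P (m + 4) (m + 6))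
    (h3 : ∀ m, P (m + 4) (m + 3)) (h4 : ∀ m, P (m + 4) (m + 2))
    (hf : ∀ k l : ZMod N, l ≠ k → l ≠ k + 1 → l ≠ k + 2 → k ≠ l + 1 → k ≠ l + 2 → P k l)
    (k l : ZMod N) : P k l := by
  by_cases e0 : l = k
  · have := h0 (k - 4)
    rwa [sub_add_cancel, show P k k = P k l by rw [e0]] at this
  by_cases e1 : l = k + 1
  · have := h1 (k - 4)
    rwa [sub_add_cancel, show k - 4 + 5 = l by rw [e1]; ring] at this
  by_cases e2 : l = k + 2
  · have := h2 (k - 4)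
    rwa [sub_add_cancel, show k - 4 + 6 = l by rw [e2]; ring] at this
  by_cases e3 : k = l + 1
  · have := h3 (k - 4)
    rwa [sub_add_cancel, show k - 4 + 3 = l by rw [e3]; ring] at this
  by_cases e4 : k = l + 2
  · have := h4 (k - 4)
    rwa [sub_add_cancel, show k - 4 + 2 = l by rw [e4]; ring] at this
  exact hf k l e0 e1 e2 e3 e4

theorem c1_M1 {N : ℕ} (α ε : ℝ) (x : Phase N) (k : ZMod N) : c1 (miuraMR1 α ε x) k =
    c1 x k + ε * c2 x (k - 1) + ε * α * c1 x k * c2 x (k - 1) := rfl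
theorem c2_M1 {N : ℕ} (α ε : ℝ) (x : Phase N) (k : ZMod N) : c2 (miuraMR1 α ε x) k =
    c2 x k * (1 + ε * c1 x k) * (1 + ε * α * c2 x (k - 1)) := rfl
theorem c1_M2 {N : ℕ} (α ε : ℝ) (x : Phase N) (k : ZMod N) : c1 (miuraMR2 α ε x) k =
    c1 x k + ε * c2 x k + ε * α * c1 x k * c2 x k := rfl
theorem c2_M2 {N : ℕ} (α ε : ℝ) (x : Phase N) (k : ZMod N) : c2 (miuraMR2 α ε x) k =
    c2 x k * (1 + ε * c1 x (k + 1)) * (1 + ε * α * c2 x (k + 1)) := rfl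

theorem poisson_1_JMR12 {N : ℕ} [NeZero N] (hN : 5 ≤ N) (α ε : ℝ) (x : Phase N)
    (hx : ∀ k : ZMod N, 1 + ε * α * c2 x k ≠ 0) :
    PoissonMapAt (miuraMR1 α ε) (JMR12 α ε) (fun y i j => JR1 α y i j + ε * JT2 y i j) x := by
  refine poisson_of (hd1 α ε x) ?_
  rintro (k | k) (l | l) <;> revert k l <;> refine idx_cases _ ?_ ?_ ?_ ?_ ?_ ?_
  all_goals first
    | (intro m
       have h2 := hx (m + 2)
       have h3 := hx (m + 3)
       have h4 := hx (m + 4)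
       have h5 := hx (m + 5)
       have h6 := hx (m + 6)
       have hl := lit_facts hN m
       have hs := shift_facts m
       simp only [DM1, JMR12, JR1, JT2, c1_M1, c2_M1, hs, hl, ite_true, ite_false]
       clear hs hl
       first
         | ring1
         | (field_simp
            ring1))
    | (intro k l e0 e1 e2 e3 e4
       have hf := far_facts e0 e1 e2 e3 e4
       simp only [DM1, JMR12, JR1, JT2, c1_M1, c2_M1, sub_add_cancel, add_sub_cancel_right,
         hf, ite_false, mul_zero, add_zero])

theorem poisson_1_JMR23 {N : ℕ} [NeZero N] (hN : 5 ≤ N) (α ε : ℝ) (x : Phase N)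
    (hx : ∀ k : ZMod N, 1 + ε * α * c2 x k ≠ 0) :
    PoissonMapAt (miuraMR1 α ε) (JMR23 α ε) (fun y i j => JT2 y i j + ε * JR3 α y i j) x := by
  refine poisson_of (hd1 α ε x) ?_
  rintro (k | k) (l | l) <;> revert k l <;> refine idx_cases _ ?_ ?_ ?_ ?_ ?_ ?_
  all_goals first
    | (intro m
       have h2 := hx (m + 2)
       have h3 := hx (m + 3)
       have h4 := hx (m + 4)
       have h5 := hx (m + 5)
       have h6 := hx (m + 6)
       have hl := lit_facts hN m
       have hs := shift_facts m
       simp only [DM1, JMR23, JR3, JT2, c1_M1, c2_M1, hs, hl, ite_true, ite_false]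
       clear hs hl
       first
         | ring1
         | (field_simp
            ring1))
    | (intro k l e0 e1 e2 e3 e4
       have hf := far_facts e0 e1 e2 e3 e4
       simp only [DM1, JMR23, JR3, JT2, c1_M1, c2_M1, sub_add_cancel, add_sub_cancel_right,
         hf, ite_false, mul_zero, add_zero])

theorem poisson_2_JMR12 {N : ℕ} [NeZero N] (hN : 5 ≤ N) (α ε : ℝ) (x : Phase N)
    (hx : ∀ k : ZMod N, 1 + ε * α * c2 x k ≠ 0) :
    PoissonMapAt (miuraMR2 α ε) (JMR12 α ε) (fun y i j => JR1 α y i j + ε * JT2 y i j) x := by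
  refine poisson_of (hd2 α ε x) ?_
  rintro (k | k) (l | l) <;> revert k l <;> refine idx_cases _ ?_ ?_ ?_ ?_ ?_ ?_
  all_goals first
    | (intro m
       have h2 := hx (m + 2)
       have h3 := hx (m + 3)
       have h4 := hx (m + 4)
       have h5 := hx (m + 5)
       have h6 := hx (m + 6)
       have hl := lit_facts hN m
       have hs := shift_facts m
       simp only [DM2, JMR12, JR1, JT2, c1_M2, c2_M2, hs, hl, ite_true, ite_false]
       clear hs hl
       first
         | ring1
         | (field_simp
            ring1))
    | (intro k l e0 e1 e2 e3 e4
       have hf := far_facts e0 e1 e2 e3 e4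
       simp only [DM2, JMR12, JR1, JT2, c1_M2, c2_M2, sub_add_cancel, add_sub_cancel_right,
         hf, ite_false, mul_zero, add_zero])

theorem poisson_2_JMR23 {N : ℕ} [NeZero N] (hN : 5 ≤ N) (α ε : ℝ) (x : Phase N)
    (hx : ∀ k : ZMod N, 1 + ε * α * c2 x k ≠ 0) :
    PoissonMapAt (miuraMR2 α ε) (JMR23 α ε) (fun y i j => JT2 y i j + ε * JR3 α y i j) x := by
  refine poisson_of (hd2 α ε x) ?_
  rintro (k | k) (l | l) <;> revert k l <;> refine idx_cases _ ?_ ?_ ?_ ?_ ?_ ?_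
  all_goals first
    | (intro m
       have h2 := hx (m + 2)
       have h3 := hx (m + 3)
       have h4 := hx (m + 4)
       have h5 := hx (m + 5)
       have h6 := hx (m + 6)
       have hl := lit_facts hN m
       have hs := shift_facts m
       simp only [DM2, JMR23, JR3, JT2, c1_M2, c2_M2, hs, hl, ite_true, ite_false]
       clear hs hl
       first
         | ring1
         | (field_simp
            ring1))
    | (intro k l e0 e1 e2 e3 e4
       have hf := far_facts e0 e1 e2 e3 e4
       simp only [DM2, JMR23, JR3, JT2, c1_M2, c2_M2, sub_add_cancel, add_sub_cancel_right,
         hf, ite_false, mul_zero, add_zero])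

theorem pullP_1 {N : ℕ} [NeZero N] (α ε : ℝ) (x : Phase N) :
    PullbackAt (miuraMR1 α ε) (mrtlPp α ε) (rtlP α) x := by
  refine pull_of (hd1 α ε x) ?_
  rintro (k | k) <;>
  simp only [DM1, mrtlPp, rtlP, c1_M1, c2_M1, sub_add_cancel, add_sub_cancel_right] <;>
  ring

theorem pullM_1 {N : ℕ} [NeZero N] (α ε : ℝ) (x : Phase N)
    (hx : ∀ k : ZMod N, 1 + ε * α * c2 x k ≠ 0 ∧ 1 + α * c1 x k ≠ 0) :
    PullbackAt (miuraMR1 α ε) (mrtlPm α ε) (rtlM α) x := by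
  have hfac : ∀ k : ZMod N, 1 + α * c1 (miuraMR1 α ε x) k
      = (1 + α * c1 x k) * (1 + ε * α * c2 x (k - 1)) := fun k => by
    rw [c1_M1]
    ring
  refine pull_of (hd1 α ε x) ?_
  rintro (k | k)
  all_goals
    have a1 := (hx k).1
    have a2 := (hx k).2
    have a3 := (hx (k - 1)).1
    have a4 := (hx (k - 1)).2
    have a5 := (hx (k + 1)).1
    have a6 := (hx (k + 1)).2
    have a7 := (hx (k + 1 + 1)).1
    have a8 := (hx (k + 1 + 1)).2
    have a9 := (hx (k - 1 - 1)).1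
    have a10 := (hx (k - 1 - 1)).2
    simp only [DM1, mrtlPm, rtlM, hfac]
    simp only [c1_M1, c2_M1, sub_add_cancel, add_sub_cancel_right]
    clear hfac hx
    have b2 := a2
    have b4 := a4
    have b6 := a6
    have b8 := a8
    have b10 := a10
    rw [mul_comm α] at b2 b4 b6 b8 b10
    field_simp
    ring

theorem pullP_2 {N : ℕ} [NeZero N] (α ε : ℝ) (x : Phase N) :
    PullbackAt (miuraMR2 α ε) (mrtlPp α ε) (rtlP α) x := by
  refine pull_of (hd2 α ε x) ?_
  rintro (k | k) <;>
  simp only [DM2, mrtlPp, rtlP, c1_M2, c2_M2, sub_add_cancel, add_sub_cancel_right] <;>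
  ring

theorem pullM_2 {N : ℕ} [NeZero N] (α ε : ℝ) (x : Phase N)
    (hx : ∀ k : ZMod N, 1 + ε * α * c2 x k ≠ 0 ∧ 1 + α * c1 x k ≠ 0) :
    PullbackAt (miuraMR2 α ε) (mrtlPm α ε) (rtlM α) x := by
  have hfac : ∀ k : ZMod N, 1 + α * c1 (miuraMR2 α ε x) k
      = (1 + α * c1 x k) * (1 + ε * α * c2 x k) := fun k => by
    rw [c1_M2]
    ring
  refine pull_of (hd2 α ε x) ?_
  rintro (k | k)
  all_goals
    have a1 := (hx k).1
    have a2 := (hx k).2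
    have a3 := (hx (k - 1)).1
    have a4 := (hx (k - 1)).2
    have a5 := (hx (k + 1)).1
    have a6 := (hx (k + 1)).2
    have a7 := (hx (k + 1 + 1)).1
    have a8 := (hx (k + 1 + 1)).2
    have a9 := (hx (k - 1 - 1)).1
    have a10 := (hx (k - 1 - 1)).2
    simp only [DM2, mrtlPm, rtlM, hfac]
    simp only [c1_M2, c2_M2, sub_add_cancel, add_sub_cancel_right]
    clear hfac hx
    have b2 := a2
    have b4 := a4
    have b6 := a6
    have b8 := a8
    have b10 := a10
    rw [mul_comm α] at b2 b4 b6 b8 b10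
    field_simp
    ring

/-- the Miura maps `M₁⁽⁺⁾(α;ε), M₂⁽⁺⁾(α;ε) : ℳℛ𝒯 → ℛ𝒯` are Poisson
from `{·,·}_{12α}` to `{·,·}_{1α} + ε{·,·}_{2α}` and from `{·,·}_{23α}` to
`{·,·}_{2α} + ε{·,·}_{3α}` (where all `1 + εαq_k ≠ 0`); the pull-back of `RTL₊(α)`
under them is `MRTL₊⁽⁺⁾(α;ε)`, and where in addition all RTL₋/MRTL₋ denominators
are nonzero, the pull-back of `RTL₋(α)` is `MRTL₋⁽⁺⁾(α;ε)`. -/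
theorem stmt18 (N : ℕ) [NeZero N] (hN : 5 ≤ N) (α ε : ℝ) :
    (∀ x : Phase N, (∀ k : ZMod N, 1 + ε * α * c2 x k ≠ 0) →
      PoissonMapAt (miuraMR1 α ε) (JMR12 α ε)
        (fun y i j => JR1 α y i j + ε * JT2 y i j) x ∧
      PoissonMapAt (miuraMR2 α ε) (JMR12 α ε)
        (fun y i j => JR1 α y i j + ε * JT2 y i j) x ∧
      PoissonMapAt (miuraMR1 α ε) (JMR23 α ε)
        (fun y i j => JT2 y i j + ε * JR3 α y i j) x ∧
      PoissonMapAt (miuraMR2 α ε) (JMR23 α ε)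
        (fun y i j => JT2 y i j + ε * JR3 α y i j) x) ∧
    (∀ x : Phase N, PullbackAt (miuraMR1 α ε) (mrtlPp α ε) (rtlP α) x) ∧
    (∀ x : Phase N, PullbackAt (miuraMR2 α ε) (mrtlPp α ε) (rtlP α) x) ∧
    (∀ x : Phase N,
      (∀ k : ZMod N, 1 + ε * α * c2 x k ≠ 0 ∧ 1 + α * c1 x k ≠ 0 ∧
        1 + α * miuraMR1 α ε x (Sum.inl k) ≠ 0) →
      PullbackAt (miuraMR1 α ε) (mrtlPm α ε) (rtlM α) x) ∧
    (∀ x : Phase N,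
      (∀ k : ZMod N, 1 + ε * α * c2 x k ≠ 0 ∧ 1 + α * c1 x k ≠ 0 ∧
        1 + α * miuraMR2 α ε x (Sum.inl k) ≠ 0) →
      PullbackAt (miuraMR2 α ε) (mrtlPm α ε) (rtlM α) x) := by
  exact ⟨fun x hx => ⟨poisson_1_JMR12 hN α ε x hx, poisson_2_JMR12 hN α ε x hx,
      poisson_1_JMR23 hN α ε x hx, poisson_2_JMR23 hN α ε x hx⟩,
    pullP_1 α ε, pullP_2 α ε,
    fun x hx => pullM_1 α ε x fun k => ⟨(hx k).1, (hx k).2.1⟩,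
    fun x hx => pullM_2 α ε x fun k => ⟨(hx k).1, (hx k).2.1⟩⟩
end

section
/- Fix α ∈ ℝ. (a) Both Miura maps M_1, M_2 : ℛ𝒱 → ℛ𝒯 (given by M_1: b_k = u_k + v_{k−1}, a_k = u_k v_k and M_2: b_k = u_k + v_k, a_k = u_{k+1} v_k) are Poisson from (ℛ𝒱, {·,·}_{2α}^{ℛ𝒱}) to (ℛ𝒯, {·,·}_{2α}^{ℛ𝒯}), and M_1 is additionally Poisson from (ℛ𝒱, {·,·}_{3α}^{ℛ𝒱}) to (ℛ𝒯, {·,·}_{3α}^{ℛ𝒯}). (b) The pull-back of the flow RTL_+(α) under M_1 coincides with RVL_+(α), and, on the open set where 1 + α(u_k + v_{k−1}) ≠ 0 and 1 + α(u_{k+1} + v_k) ≠ 0 for all k, the pull-back of RTL_−(α) under M_1 coincides with RVL_−(α). -/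
open scoped BigOperators

/-- Quadratic Volterra structure matrix: `{u_k,v_k} = -u_k v_k`,
`{v_k,u_{k+1}} = -v_k u_{k+1}`. -/
noncomputable def JV2 {N : ℕ} (x : Phase N) : Idx N → Idx N → ℝ := fun i₁ i₂ =>
  match i₁, i₂ with
  | Sum.inl j, Sum.inr k =>
      if j = k then -(c1 x k * c2 x k)
      else if j = k + 1 then c2 x k * c1 x (k + 1) else 0
  | Sum.inr k, Sum.inl j =>
      if j = k then c1 x k * c2 x k
      else if j = k + 1 then -(c2 x k * c1 x (k + 1)) else 0
  | _, _ => 0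

/-- Cubic relativistic Volterra structure matrix `{·,·}_{3α}` on `ℛ𝒱`. -/
noncomputable def JRV3 (α : ℝ) {N : ℕ} (x : Phase N) : Idx N → Idx N → ℝ := fun i₁ i₂ =>
  match i₁, i₂ with
  | Sum.inl j, Sum.inr k =>
      if j = k then -(c1 x k * c2 x k * (c1 x k + c2 x k + α * c1 x k * c2 x k))
      else if j = k + 1 then c2 x k * c1 x (k + 1) * (c2 x k + c1 x (k + 1))
      else if j = k + 2 then α * c2 x k * c1 x (k + 1) * c2 x (k + 1) * c1 x (k + 2)
      else 0
  | Sum.inr k, Sum.inl j =>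
      if j = k then c1 x k * c2 x k * (c1 x k + c2 x k + α * c1 x k * c2 x k)
      else if j = k + 1 then -(c2 x k * c1 x (k + 1) * (c2 x k + c1 x (k + 1)))
      else if j = k + 2 then -(α * c2 x k * c1 x (k + 1) * c2 x (k + 1) * c1 x (k + 2))
      else 0
  | Sum.inl j, Sum.inl l =>
      if l = j + 1 then -(c1 x j * c2 x j * c1 x (j + 1) * (1 + α * c1 x j))
      else if j = l + 1 then c1 x l * c2 x l * c1 x (l + 1) * (1 + α * c1 x l)
      else 0
  | Sum.inr j, Sum.inr l =>
      if l = j + 1 then -(c2 x j * c1 x (j + 1) * c2 x (j + 1) * (1 + α * c2 x (j + 1)))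
      else if j = l + 1 then c2 x l * c1 x (l + 1) * c2 x (l + 1) * (1 + α * c2 x (l + 1))
      else 0

/-- The relativistic Volterra vector field `RVL₊(α)`, coordinates
`u_k = c1 x k`, `v_k = c2 x k`. -/
noncomputable def rvlP (α : ℝ) {N : ℕ} (x : Phase N) : Phase N := fun i =>
  match i with
  | Sum.inl k =>
      c1 x k * (c2 x k - c2 x (k - 1) + α * c1 x k * c2 x k
        - α * c1 x (k - 1) * c2 x (k - 1))
  | Sum.inr k =>
      c2 x k * (c1 x (k + 1) - c1 x k + α * c1 x (k + 1) * c2 x (k + 1)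
        - α * c1 x k * c2 x k)

/-- The relativistic Volterra vector field `RVL₋(α)`. -/
noncomputable def rvlM (α : ℝ) {N : ℕ} (x : Phase N) : Phase N := fun i =>
  match i with
  | Sum.inl k =>
      c1 x k * (c2 x k / (1 + α * (c1 x (k + 1) + c2 x k))
        - c2 x (k - 1) / (1 + α * (c1 x k + c2 x (k - 1))))
  | Sum.inr k =>
      c2 x k * (c1 x (k + 1) / (1 + α * (c1 x (k + 1) + c2 x k))
        - c1 x k / (1 + α * (c1 x k + c2 x (k - 1))))

/-- Miura map `M₁ : 𝒱 → 𝒯`: `b_k = u_k + v_{k-1}`, `a_k = u_k v_k`. -/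
noncomputable def miuraV1 {N : ℕ} (x : Phase N) : Phase N := fun i =>
  match i with
  | Sum.inl k => c1 x k + c2 x (k - 1)
  | Sum.inr k => c1 x k * c2 x k

/-- Miura map `M₂ : 𝒱 → 𝒯`: `b_k = u_k + v_k`, `a_k = u_{k+1} v_k`. -/
noncomputable def miuraV2 {N : ℕ} (x : Phase N) : Phase N := fun i =>
  match i with
  | Sum.inl k => c1 x k + c2 x k
  | Sum.inr k => c1 x (k + 1) * c2 x k


lemma hasF_c1 {N : ℕ} [NeZero N] (k : ZMod N) (x : Phase N) :
    HasFDerivAt (fun y : Phase N => c1 y k)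
      (ContinuousLinearMap.proj (R := ℝ) (φ := fun _ : Idx N => ℝ) (Sum.inl k)) x :=
  (ContinuousLinearMap.proj (R := ℝ) (φ := fun _ : Idx N => ℝ) (Sum.inl k)).hasFDerivAt

lemma hasF_c2 {N : ℕ} [NeZero N] (k : ZMod N) (x : Phase N) :
    HasFDerivAt (fun y : Phase N => c2 y k)
      (ContinuousLinearMap.proj (R := ℝ) (φ := fun _ : Idx N => ℝ) (Sum.inr k)) x :=
  (ContinuousLinearMap.proj (R := ℝ) (φ := fun _ : Idx N => ℝ) (Sum.inr k)).hasFDerivAt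

lemma pderiv_add {N : ℕ} [NeZero N] (k l : ZMod N) (i : Idx N) (x : Phase N) :
    pderiv i (fun y : Phase N => c1 y k + c2 y l) x
      = (if Sum.inl k = i then 1 else 0) + (if Sum.inr l = i then 1 else 0) := by
  unfold pderiv
  rw [((hasF_c1 k x).fun_add (hasF_c2 l x)).fderiv]
  simp [Pi.single_apply]

lemma pderiv_mul {N : ℕ} [NeZero N] (k l : ZMod N) (i : Idx N) (x : Phase N) :
    pderiv i (fun y : Phase N => c1 y k * c2 y l) x
      = (if Sum.inl k = i then c2 x l else 0) + (if Sum.inr l = i then c1 x k else 0) := by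
  unfold pderiv
  rw [((hasF_c1 k x).fun_mul (hasF_c2 l x)).fderiv]
  simp [Pi.single_apply]
  ring

/-- Collapsing a sum against a two-term gradient. -/
lemma sum_two {N : ℕ} [NeZero N] (p q : Idx N) (a b : ℝ) (g : Idx N → ℝ) :
    ∑ k, ((if p = k then a else 0) + (if q = k then b else 0)) * g k
      = a * g p + b * g q := by
  simp [add_mul, Finset.sum_add_distrib, ite_mul]

/-- Collapsing a double sum against two two-term gradients. -/
lemma sum_four {N : ℕ} [NeZero N] (p q r s : Idx N) (a b c d : ℝ) (J : Idx N → Idx N → ℝ) :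
    ∑ k, ∑ l, ((if p = k then a else 0) + (if q = k then b else 0)) * J k l *
        ((if r = l then c else 0) + (if s = l then d else 0))
      = a * (c * J p r + d * J p s) + b * (c * J q r + d * J q s) := by
  rw [← sum_two r s c d (J p), ← sum_two r s c d (J q), ← sum_two p q a b
    (fun i => ∑ k, ((if r = k then c else 0) + (if s = k then d else 0)) * J i k)]
  refine Finset.sum_congr rfl fun k _ => ?_
  rw [Finset.mul_sum]
  refine Finset.sum_congr rfl fun l _ => ?_
  ring

lemma zmod_ne {N : ℕ} (hN : 5 ≤ N) :
    (1 : ZMod N) ≠ 0 ∧ (2 : ZMod N) ≠ 0 ∧ (3 : ZMod N) ≠ 0 ∧ (4 : ZMod N) ≠ 0 := by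
  have key : ∀ n : ℕ, 0 < n → n < 5 → ((n : ℕ) : ZMod N) ≠ 0 := by
    intro n h0 h5 h
    rw [ZMod.natCast_eq_zero_iff] at h
    have := Nat.le_of_dvd h0 h
    omega
  have h1 := key 1 (by norm_num) (by norm_num)
  have h2 := key 2 (by norm_num) (by norm_num)
  have h3 := key 3 (by norm_num) (by norm_num)
  have h4 := key 4 (by norm_num) (by norm_num)
  push_cast at h1 h2 h3 h4
  exact ⟨h1, h2, h3, h4⟩

/-- Relative position of two indices. -/
lemma zmod_cases {N : ℕ} (m n : ZMod N) :
    n = m ∨ n = m + 1 ∨ n = m + 2 ∨ m = n + 1 ∨ m = n + 2 ∨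
      (n ≠ m ∧ n ≠ m + 1 ∧ n ≠ m + 2 ∧ m ≠ n + 1 ∧ m ≠ n + 2) := by
  tauto

set_option maxHeartbeats 4000000 in
lemma poisson_one_two {N : ℕ} [NeZero N] (hN : 5 ≤ N) (x : Phase N) :
    PoissonMapAt miuraV1 JV2 JT2 x := by
  obtain ⟨h1, h2, h3, h4⟩ := zmod_ne hN
  rintro (m | m) (n | n) <;>
  simp only [miuraV1, pderiv_add, pderiv_mul, sum_four] <;>
  obtain ⟨m, rfl⟩ : ∃ p, m = p + 1 := ⟨m - 1, by ring⟩ <;>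
  obtain ⟨n, rfl⟩ : ∃ p, n = p + 1 := ⟨n - 1, by ring⟩ <;>
  simp only [JV2, JT2, c1, c2, miuraV1, add_sub_cancel_right] <;>
  rcases zmod_cases m n with rfl | rfl | rfl | rfl | rfl | ⟨e1, e2, e3, e4, e5⟩ <;>
  (repeat'
    split <;> rename_i h <;> try (
      exfalso
      first
        | exact h (by ring1)
        | (have hd := sub_eq_zero.2 h
           ring_nf at hd
           first
            | exact h1 hd | exact h2 hd | exact h3 hd | exact h4 hd
            | exact h1 (neg_eq_zero.1 hd) | exact h2 (neg_eq_zero.1 hd)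
            | exact h3 (neg_eq_zero.1 hd) | exact h4 (neg_eq_zero.1 hd))
        | exact e1 (by linear_combination h) | exact e1 (by linear_combination -h)
        | exact e2 (by linear_combination h) | exact e2 (by linear_combination -h)
        | exact e3 (by linear_combination h) | exact e3 (by linear_combination -h)
        | exact e4 (by linear_combination h) | exact e4 (by linear_combination -h)
        | exact e5 (by linear_combination h) | exact e5 (by linear_combination -h))) <;>
  ring_nf

set_option maxHeartbeats 4000000 in
lemma poisson_two_two {N : ℕ} [NeZero N] (hN : 5 ≤ N) (x : Phase N) :
    PoissonMapAt miuraV2 JV2 JT2 x := by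
  obtain ⟨h1, h2, h3, h4⟩ := zmod_ne hN
  rintro (m | m) (n | n) <;>
  simp only [miuraV2, pderiv_add, pderiv_mul, sum_four] <;>
  simp only [JV2, JT2, c1, c2, miuraV2] <;>
  rcases zmod_cases m n with rfl | rfl | rfl | rfl | rfl | ⟨e1, e2, e3, e4, e5⟩ <;>
  (repeat'
    split <;> rename_i h <;> try (
      exfalso
      first
        | exact h (by ring1)
        | (have hd := sub_eq_zero.2 h
           ring_nf at hd
           first
            | exact h1 hd | exact h2 hd | exact h3 hd | exact h4 hd
            | exact h1 (neg_eq_zero.1 hd) | exact h2 (neg_eq_zero.1 hd)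
            | exact h3 (neg_eq_zero.1 hd) | exact h4 (neg_eq_zero.1 hd))
        | exact e1 (by linear_combination h) | exact e1 (by linear_combination -h)
        | exact e2 (by linear_combination h) | exact e2 (by linear_combination -h)
        | exact e3 (by linear_combination h) | exact e3 (by linear_combination -h)
        | exact e4 (by linear_combination h) | exact e4 (by linear_combination -h)
        | exact e5 (by linear_combination h) | exact e5 (by linear_combination -h))) <;>
  ring_nf

set_option maxHeartbeats 4000000 in
lemma poisson_one_three {N : ℕ} [NeZero N] (hN : 5 ≤ N) (α : ℝ) (x : Phase N) :
    PoissonMapAt miuraV1 (JRV3 α) (JR3 α) x := by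
  obtain ⟨h1, h2, h3, h4⟩ := zmod_ne hN
  rintro (m | m) (n | n) <;>
  simp only [miuraV1, pderiv_add, pderiv_mul, sum_four] <;>
  obtain ⟨m, rfl⟩ : ∃ p, m = p + 1 := ⟨m - 1, by ring⟩ <;>
  obtain ⟨n, rfl⟩ : ∃ p, n = p + 1 := ⟨n - 1, by ring⟩ <;>
  simp only [JRV3, JR3, c1, c2, miuraV1, add_sub_cancel_right] <;>
  rcases zmod_cases m n with rfl | rfl | rfl | rfl | rfl | ⟨e1, e2, e3, e4, e5⟩ <;>
  (repeat'
    split <;> rename_i h <;> try (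
      exfalso
      first
        | exact h (by ring1)
        | (have hd := sub_eq_zero.2 h
           ring_nf at hd
           first
            | exact h1 hd | exact h2 hd | exact h3 hd | exact h4 hd
            | exact h1 (neg_eq_zero.1 hd) | exact h2 (neg_eq_zero.1 hd)
            | exact h3 (neg_eq_zero.1 hd) | exact h4 (neg_eq_zero.1 hd))
        | exact e1 (by linear_combination h) | exact e1 (by linear_combination -h)
        | exact e2 (by linear_combination h) | exact e2 (by linear_combination -h)
        | exact e3 (by linear_combination h) | exact e3 (by linear_combination -h)
        | exact e4 (by linear_combination h) | exact e4 (by linear_combination -h)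
        | exact e5 (by linear_combination h) | exact e5 (by linear_combination -h))) <;>
  ring_nf

lemma pull_plus {N : ℕ} [NeZero N] (α : ℝ) (x : Phase N) :
    PullbackAt miuraV1 (rvlP α) (rtlP α) x := by
  rintro (m | m) <;>
  simp only [miuraV1, pderiv_add, pderiv_mul, sum_two] <;>
  obtain ⟨m, rfl⟩ : ∃ p, m = p + 1 := ⟨m - 1, by ring⟩ <;>
  simp only [rvlP, rtlP, c1, c2, miuraV1, add_sub_cancel_right] <;>
  ring_nf

lemma pull_minus {N : ℕ} [NeZero N] (α : ℝ) (x : Phase N) :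
    PullbackAt miuraV1 (rvlM α) (rtlM α) x := by
  rintro (m | m) <;>
  simp only [miuraV1, pderiv_add, pderiv_mul, sum_two] <;>
  obtain ⟨m, rfl⟩ : ∃ p, m = p + 1 := ⟨m - 1, by ring⟩ <;>
  simp only [rvlM, rtlM, c1, c2, miuraV1, add_sub_cancel_right,
    div_eq_mul_inv] <;>
  ring

/-- the Miura maps `M₁, M₂ : ℛ𝒱 → ℛ𝒯` are Poisson for the quadratic
brackets, `M₁` additionally for the cubic brackets; the pull-back of `RTL₊(α)`
under `M₁` is `RVL₊(α)`, and where all `1 + α(u_k + v_{k-1}) ≠ 0` and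
`1 + α(u_{k+1} + v_k) ≠ 0`, the pull-back of `RTL₋(α)` under `M₁` is `RVL₋(α)`. -/
theorem stmt19 (N : ℕ) [NeZero N] (hN : 5 ≤ N) (α : ℝ) :
    (∀ x : Phase N, PoissonMapAt miuraV1 JV2 JT2 x) ∧
    (∀ x : Phase N, PoissonMapAt miuraV2 JV2 JT2 x) ∧
    (∀ x : Phase N, PoissonMapAt miuraV1 (JRV3 α) (JR3 α) x) ∧
    (∀ x : Phase N, PullbackAt miuraV1 (rvlP α) (rtlP α) x) ∧
    (∀ x : Phase N,
      (∀ k : ZMod N, 1 + α * (c1 x k + c2 x (k - 1)) ≠ 0 ∧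
        1 + α * (c1 x (k + 1) + c2 x k) ≠ 0) →
      PullbackAt miuraV1 (rvlM α) (rtlM α) x) := by
  exact ⟨poisson_one_two hN, poisson_two_two hN, poisson_one_three hN α, pull_plus α,
    fun x _ => pull_minus α x⟩
end
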